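/- For every integer r ≥ 1 and every r-SCB integer function w, there exists an r-CCB function ŵ of order at most ⌈r/2⌉ such that ŵ(i) = w(i) for every i ∈ {0,1,…,r}. (Thus any submodular cardinality-based splitting function can be modeled exactly using at most half as many cardinality-based gadgets as there are distinct cut penalties, rather than r gadgets.) -/

import Mathlib

/-- An `r`-SCB integer function. -/
def IsSCB (r : ℕ) (w : ℕ → ℝ) : Prop :=
  w 0 = 0 ∧ (∀ i, i < r → w i ≤ w (i + 1)) ∧
    ∀ j, 1 ≤ j → j + 1 ≤ r → w (j - 1) + w (j + 1) ≤ 2 * w j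

/-- An `r`-CCB function of order `J` (possibly `J = 0`, the zero function). -/
def IsCCB (r J : ℕ) (what : ℕ → ℝ) : Prop :=
  ∃ a b : Fin J → ℝ,
    (∀ j, 0 < a j) ∧ (∀ j, 0 < b j) ∧ StrictMono b ∧ (∀ j, b j ≤ (r : ℝ)) ∧
    ∀ i : ℕ, i ≤ r → what i = ∑ j, a j * min (i : ℝ) (b j)

/-!
Extended by the constant `w r` past `r`, an SCB function has nonincreasing slopes that vanish from
`r` on, so it is the sum of the functions `i ↦ min i (j + 1)` weighted by the drops of the slope at
the points `j + 1`, at most `r` of which are nonzero. No integer lies strictly between `2 * k + 1`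
and `2 * k + 2`, so on the integers the two gadgets with these breakpoints add up to a single gadget
whose breakpoint is their weighted mean; this halves the number of gadgets.
-/

open Finset

section SlopeDrop

variable {R : Type*}

/-- The decrease of the slope of `w` at the point `j + 1`, i.e. the negated second difference there.
The index is shifted by one to avoid a truncated subtraction. -/
def slopeDrop [AddGroup R] (w : ℕ → R) (j : ℕ) : R :=
  (w (j + 1) - w j) - (w (j + 2) - w (j + 1))

theorem sum_slopeDrop_mul_min [Ring R] (w : ℕ → R) (i n : ℕ) :
    ∑ j ∈ range n, slopeDrop w j * (min i (j + 1) : ℕ) =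
      w (min i n) - w 0 - (w (n + 1) - w n) * (min i n : ℕ) := by
  induction n with
  | zero => simp
  | succ n ih =>
    rw [sum_range_succ, ih, slopeDrop]
    rcases le_or_gt i n with hi | hi
    · rw [min_eq_left hi, min_eq_left (hi.trans n.le_succ)]
      noncomm_ring
    · rw [min_eq_right hi.le, min_eq_right (Nat.succ_le_of_lt hi)]
      push_cast
      noncomm_ring

/-- The extension of `w` from `{0, …, r}` to all of `ℕ` that is constant from `r` on. -/
def flatExtension (r : ℕ) (w : ℕ → R) (i : ℕ) : R :=
  w (min i r)

theorem flatExtension_of_le {r i : ℕ} (w : ℕ → R) (h : i ≤ r) : flatExtension r w i = w i := by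
  rw [flatExtension, min_eq_left h]

theorem flatExtension_of_ge {r i : ℕ} (w : ℕ → R) (h : r ≤ i) : flatExtension r w i = w r := by
  rw [flatExtension, min_eq_right h]

theorem slopeDrop_flatExtension_of_ge [AddGroup R] {r j : ℕ} (w : ℕ → R) (h : r ≤ j) :
    slopeDrop (flatExtension r w) j = 0 := by
  simp [slopeDrop, flatExtension_of_ge w h, flatExtension_of_ge w (Nat.le_add_right_of_le h)]

theorem eq_sum_slopeDrop_flatExtension [Ring R] {r n i : ℕ} {w : ℕ → R} (hw : w 0 = 0)
    (hn : r ≤ n) (hi : i ≤ r) :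
    w i = ∑ j ∈ range n, slopeDrop (flatExtension r w) j * (min i (j + 1) : ℕ) := by
  rw [sum_slopeDrop_mul_min, flatExtension_of_ge w hn, flatExtension_of_ge w (hn.trans n.le_succ),
    min_eq_left (hi.trans hn), flatExtension_of_le w hi, flatExtension_of_le w r.zero_le, hw]
  simp only [sub_self, zero_mul, sub_zero]

end SlopeDrop

theorem IsSCB.slopeDrop_flatExtension_nonneg {r : ℕ} {w : ℕ → ℝ} (hw : IsSCB r w) (j : ℕ) :
    0 ≤ slopeDrop (flatExtension r w) j := by
  obtain ⟨-, hmono, hconc⟩ := hw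
  rcases lt_trichotomy (j + 1) r with hj | rfl | hj
  · have h := hconc (j + 1) (by lia) hj
    rw [Nat.add_sub_cancel] at h
    rw [slopeDrop, flatExtension_of_le w hj.le, flatExtension_of_le w (by lia),
      flatExtension_of_le w (by lia)]
    linarith
  · have h := hmono j j.lt_succ_self
    rw [slopeDrop, flatExtension_of_le w le_rfl, flatExtension_of_le w j.le_succ,
      flatExtension_of_ge w (Nat.le_succ _)]
    linarith
  · exact (slopeDrop_flatExtension_of_ge w (Nat.le_of_lt_succ hj)).ge

section MergedBreakpoint

variable {K : Type*} [Field K]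

/-- The mean of the breakpoints `p` and `q` with weights `c` and `d`. It is written so that the
junk value at `c + d = 0` is `p`, which still lies between `p` and `q`. -/
def mergedBreakpoint (c d p q : K) : K :=
  p + d / (c + d) * (q - p)

theorem mergedBreakpoint_zero_right (c p q : K) : mergedBreakpoint c 0 p q = p := by
  simp [mergedBreakpoint]

theorem add_mul_mergedBreakpoint {c d : K} (h : c + d ≠ 0) (p q : K) :
    (c + d) * mergedBreakpoint c d p q = c * p + d * q := by
  rw [mergedBreakpoint]
  field_simp
  ring

variable [LinearOrder K] [IsStrictOrderedRing K] {c d p q x : K}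

theorem le_mergedBreakpoint (hc : 0 ≤ c) (hd : 0 ≤ d) (hpq : p ≤ q) :
    p ≤ mergedBreakpoint c d p q :=
  le_add_of_nonneg_right <| mul_nonneg (div_nonneg hd (add_nonneg hc hd)) (sub_nonneg.2 hpq)

theorem mergedBreakpoint_le (hc : 0 ≤ c) (hd : 0 ≤ d) (hpq : p ≤ q) :
    mergedBreakpoint c d p q ≤ q := by
  have h : d / (c + d) ≤ 1 :=
    div_le_one_of_le₀ (le_add_of_nonneg_left hc) (add_nonneg hc hd)
  have := mul_le_of_le_one_left (sub_nonneg.2 hpq) h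
  rw [mergedBreakpoint]
  linarith

theorem mul_min_add_mul_min_eq_mul_min_mergedBreakpoint (hc : 0 ≤ c) (hd : 0 ≤ d) (hpq : p ≤ q)
    (hx : x ≤ p ∨ q ≤ x) :
    c * min x p + d * min x q = (c + d) * min x (mergedBreakpoint c d p q) := by
  rcases hx with hx | hx
  · rw [min_eq_left hx, min_eq_left (hx.trans hpq),
      min_eq_left (hx.trans (le_mergedBreakpoint hc hd hpq)), add_mul]
  · rw [min_eq_right (hpq.trans hx), min_eq_right hx,
      min_eq_right ((mergedBreakpoint_le hc hd hpq).trans hx)]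
    rcases eq_or_ne (c + d) 0 with h | h
    · obtain ⟨rfl, rfl⟩ := (add_eq_zero_iff_of_nonneg hc hd).1 h
      simp
    · exact (add_mul_mergedBreakpoint h p q).symm

end MergedBreakpoint

section IsCCB

variable {ι : Type*} [LinearOrder ι] {s : Finset ι} {a b : ι → ℝ} {r : ℕ} {f : ℕ → ℝ}

theorem isCCB_card_of_strictMonoOn (ha : ∀ k ∈ s, 0 < a k) (hb : ∀ k ∈ s, 0 < b k)
    (hmono : StrictMonoOn b s) (hbr : ∀ k ∈ s, b k ≤ r)
    (hf : ∀ i ≤ r, f i = ∑ k ∈ s, a k * min (i : ℝ) (b k)) : IsCCB r #s f := by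
  let e : Fin #s ≃o s := s.orderIsoOfFin rfl
  refine ⟨fun j ↦ a (e j), fun j ↦ b (e j), fun j ↦ ha _ (e j).2, fun j ↦ hb _ (e j).2,
    fun i j hij ↦ hmono (e i).2 (e j).2 (e.strictMono hij), fun j ↦ hbr _ (e j).2, fun i hi ↦ ?_⟩
  rw [hf i hi, ← sum_coe_sort s]
  exact (e.toEquiv.sum_comp fun k : s ↦ a k * min (i : ℝ) (b k)).symm

theorem exists_isCCB_of_nonneg (ha : ∀ k ∈ s, 0 ≤ a k) (hb : ∀ k ∈ s, 0 < b k)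
    (hmono : StrictMonoOn b s) (hbr : ∀ k ∈ s, b k ≤ r)
    (hf : ∀ i ≤ r, f i = ∑ k ∈ s, a k * min (i : ℝ) (b k)) : ∃ J ≤ #s, IsCCB r J f := by
  have hsub : s.filter (0 < a ·) ⊆ s := filter_subset _ _
  refine ⟨_, card_le_card hsub, isCCB_card_of_strictMonoOn (a := a) (b := b)
    (fun k hk ↦ (mem_filter.1 hk).2) (fun k hk ↦ hb k (hsub hk))
    (hmono.mono (coe_subset.2 hsub)) (fun k hk ↦ hbr k (hsub hk)) fun i hi ↦ ?_⟩
  rw [hf i hi, sum_filter_of_ne]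
  exact fun k hk hne ↦ (ha k hk).lt_of_ne' (left_ne_zero_of_mul hne)

end IsCCB

theorem sum_range_two_mul {M : Type*} [AddCommMonoid M] (f : ℕ → M) (n : ℕ) :
    ∑ j ∈ range (2 * n), f j = ∑ k ∈ range n, (f (2 * k) + f (2 * k + 1)) := by
  induction n with
  | zero => simp
  | succ n ih =>
    rw [Nat.mul_succ, sum_range_succ, sum_range_succ, ih, sum_range_succ _ n, add_assoc]

section PairBreakpoint

/-- The breakpoint of the gadget replacing the two gadgets with breakpoints `2 * k + 1` and
`2 * k + 2`, where `d j` is the weight of the gadget with breakpoint `j + 1`. -/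
noncomputable def pairBreakpoint (d : ℕ → ℝ) (k : ℕ) : ℝ :=
  mergedBreakpoint (d (2 * k)) (d (2 * k + 1)) (2 * k + 1) (2 * k + 2)

variable {d : ℕ → ℝ}

theorem le_pairBreakpoint (hd : ∀ j, 0 ≤ d j) (k : ℕ) : (2 * k + 1 : ℝ) ≤ pairBreakpoint d k :=
  le_mergedBreakpoint (hd _) (hd _) (by linarith)

theorem pairBreakpoint_le (hd : ∀ j, 0 ≤ d j) (k : ℕ) : pairBreakpoint d k ≤ 2 * k + 2 :=
  mergedBreakpoint_le (hd _) (hd _) (by linarith)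

theorem pairBreakpoint_pos (hd : ∀ j, 0 ≤ d j) (k : ℕ) : 0 < pairBreakpoint d k :=
  lt_of_lt_of_le (by positivity) (le_pairBreakpoint hd k)

theorem pairBreakpoint_strictMono (hd : ∀ j, 0 ≤ d j) : StrictMono (pairBreakpoint d) := by
  refine strictMono_nat_of_lt_succ fun k ↦ ?_
  calc pairBreakpoint d k ≤ 2 * k + 2 := pairBreakpoint_le hd k
    _ < 2 * (k + 1 : ℕ) + 1 := by push_cast; linarith
    _ ≤ pairBreakpoint d (k + 1) := le_pairBreakpoint hd (k + 1)

theorem pairBreakpoint_le_of_two_mul_lt {r k : ℕ} (hd : ∀ j, 0 ≤ d j) (hdr : d r = 0)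
    (hk : 2 * k < r) : pairBreakpoint d k ≤ r := by
  rcases (Nat.succ_le_of_lt hk).eq_or_lt with rfl | hlt
  · rw [pairBreakpoint, hdr, mergedBreakpoint_zero_right]
    push_cast
    rfl
  · exact (pairBreakpoint_le hd k).trans (mod_cast hlt)

theorem mul_min_add_mul_min_eq_mul_min_pairBreakpoint (hd : ∀ j, 0 ≤ d j) (i k : ℕ) :
    d (2 * k) * (min i (2 * k + 1) : ℕ) + d (2 * k + 1) * (min i (2 * k + 1 + 1) : ℕ) =
      (d (2 * k) + d (2 * k + 1)) * min (i : ℝ) (pairBreakpoint d k) := by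
  have hi : (i : ℝ) ≤ 2 * k + 1 ∨ (2 * k + 2 : ℝ) ≤ i := by
    exact_mod_cast Nat.lt_or_ge i (2 * k + 2) |>.imp_left Nat.le_of_lt_succ
  rw [pairBreakpoint, ← mul_min_add_mul_min_eq_mul_min_mergedBreakpoint (hd _) (hd _)
    (by linarith) hi]
  push_cast
  rw [add_assoc (2 * k : ℝ) 1 1, one_add_one_eq_two]

end PairBreakpoint

/-- **Exact modeling with `⌈r/2⌉` CB-gadgets.** For every integer `r ≥ 1` and every
`r`-SCB integer function `w`, there is an `r`-CCB function `ŵ` of order at most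
`⌈r/2⌉ = (r+1)/2` that agrees with `w` on all of `{0,1,…,r}`. -/
theorem exact_ccb_half (r : ℕ) (hr : 1 ≤ r) (w : ℕ → ℝ) (hw : IsSCB r w) :
    ∃ (J : ℕ) (what : ℕ → ℝ),
      J ≤ (r + 1) / 2 ∧ IsCCB r J what ∧ ∀ i ≤ r, what i = w i := by
  let d := slopeDrop (flatExtension r w)
  have hd : ∀ j, 0 ≤ d j := hw.slopeDrop_flatExtension_nonneg
  have hdr : d r = 0 := slopeDrop_flatExtension_of_ge w le_rfl
  have hw_sum : ∀ i ≤ r, w i = ∑ k ∈ range ((r + 1) / 2),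
      (d (2 * k) + d (2 * k + 1)) * min (i : ℝ) (pairBreakpoint d k) := fun i hi ↦ by
    rw [eq_sum_slopeDrop_flatExtension hw.1 (n := 2 * ((r + 1) / 2)) (by lia) hi,
      sum_range_two_mul]
    exact sum_congr rfl fun k _ ↦ mul_min_add_mul_min_eq_mul_min_pairBreakpoint hd i k
  obtain ⟨J, hJ, hccb⟩ := exists_isCCB_of_nonneg (fun k _ ↦ add_nonneg (hd _) (hd _))
    (fun k _ ↦ pairBreakpoint_pos hd k) ((pairBreakpoint_strictMono hd).strictMonoOn _)
    (fun k hk ↦ pairBreakpoint_le_of_two_mul_lt hd hdr (by have := mem_range.1 hk; lia)) hw_sum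
  exact ⟨J, w, hJ.trans_eq (card_range _), hccb, fun _ _ ↦ rfl⟩
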